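/- Let ξ and η be jointly stationary and ergodic random measures on ℝ^d such that ξ is diffuse, η is discrete (but with possibly non-isolated atoms), and ∞ > λ_ξ ≥ λ_η > 0. Then there exists a measurable set A ⊂ Ω × ℝ^d and an allocation τ balancing ξ_A and η, where ξ_A denotes the restriction of ξ to A. Moreover, if λ_ξ = λ_η, then τ balances ξ and η. -/

import Mathlib

/-!
The allocation is built greedily. Replace first `ξ` and `η` by versions that are locally finite and
flow-covariant for every `ω` (`exists_perfect_modification`), so that every construction made from
them is covariant without exceptional null sets.

Enumerate all pairs of a displacement window `D` (from a countable family of small balls) and a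
threshold `r > 0`. In the round of `(D, r)` an unallocated site `x` applies to `y` if `y` is the only
point of `x + D` whose residual demand (its `η`-mass minus the `ξ`-mass already allocated to it)
exceeds `r`. Each atom accepts applicants in a fixed covariant order until its demand is met. As `ξ`
is diffuse, an atom that rejects somebody is saturated exactly (`residual_greedyStep_eq_zero`).
Although the atoms of `η` may accumulate, those of mass at least `r` are locally finite, so
every atom is isolated by a small enough window. Hence for each `ω` with diffuse `ξ ω` either every
site is allocated or every atom is saturated (`greedyLimit_dichotomy`).

By the mass transport principle (`mass_transport`), the mean `ξ`-mass sent out of the unit cube is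
the mean mass received by it. The event that all atoms are saturated is invariant. Were it of
probability zero, all sites would be allocated, the unit cube would receive mean mass
`λ_ξ ≥ λ_η`, and since it never receives more than its demand all atoms would be saturated after all;
by ergodicity the event has probability one (`ae_residual_eq_zero`). As `η` is discrete, this says
that the allocation balances `η` with the restriction of `ξ` to the set `A` of allocated sites. If
`λ_ξ = λ_η`, mass transport shows moreover that the unallocated sites are `ξ`-null
(`ae_unallocated_null`).
-/

open MeasureTheory ENNReal

noncomputable section

/-- Measurable structure on `Option α`; the point `∞` is modeled by `none`. -/
instance {α : Type*} [MeasurableSpace α] : MeasurableSpace (Option α) :=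
  MeasurableSpace.map some inferInstance

namespace Paper

variable {Ω : Type*} [MeasurableSpace Ω]
variable {G : Type*} [MeasurableSpace G] [TopologicalSpace G] [AddCommGroup G]

/-- A measurable flow `(θ_x)_{x ∈ G}` on `Ω`. -/
structure IsMeasurableFlow (θ : G → Ω → Ω) : Prop where
  measurable : Measurable fun p : G × Ω => θ p.1 p.2
  id_eq : θ 0 = id
  comp : ∀ x y : G, θ x ∘ θ y = θ (x + y)

/-- `P` is stationary under the flow `θ`. -/
def IsStationary (P : Measure Ω) (θ : G → Ω → Ω) : Prop :=
  ∀ x : G, P.map (θ x) = P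

/-- `P` is ergodic under the flow `θ`: invariant events are trivial. -/
def IsErgodicFlow (P : Measure Ω) (θ : G → Ω → Ω) : Prop :=
  ∀ A : Set Ω, MeasurableSet A → (∀ x : G, θ x ⁻¹' A = A) → P A = 0 ∨ P A = 1

/-- A random measure: a measurable kernel which is a.s. locally finite
(finite on compact sets). -/
def IsRandomMeasure (P : Measure Ω) (ξ : Ω → Measure G) : Prop :=
  (∀ s : Set G, MeasurableSet s → Measurable fun ω => ξ ω s) ∧
    ∀ᵐ ω ∂P, ∀ K : Set G, IsCompact K → ξ ω K < ∞

/-- Flow-invariance (`joint stationarity`) of a random measure: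
`ξ(θ_x ω, C − x) = ξ(ω, C)`. -/
def IsFlowInvariant (P : Measure Ω) (θ : G → Ω → Ω) (ξ : Ω → Measure G) : Prop :=
  ∀ x : G, ∀ᵐ ω ∂P, ξ (θ x ω) = (ξ ω).map (fun y => y - x)

/-- A diffuse (non-atomic) random measure. -/
def IsDiffuseRM (P : Measure Ω) (ξ : Ω → Measure G) : Prop :=
  ∀ᵐ ω ∂P, ∀ x : G, ξ ω {x} = 0

/-- A discrete (purely atomic) random measure: a.s. carried by a countable set. -/
def IsDiscreteRM (P : Measure Ω) (ξ : Ω → Measure G) : Prop :=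
  ∀ᵐ ω ∂P, ∃ s : Set G, s.Countable ∧ ξ ω sᶜ = 0

/-- A locally finite set of points. -/
def LocallyFiniteSet (s : Set G) : Prop :=
  ∀ x : G, ∃ U ∈ nhds x, (s ∩ U).Finite

/-- A simple point process: a.s. the counting measure of a locally finite set. -/
def IsSimplePointProcess (P : Measure Ω) (χ : Ω → Measure G) : Prop :=
  ∀ᵐ ω ∂P, ∃ s : Set G, LocallyFiniteSet s ∧ χ ω = Measure.count.restrict s

/-- An allocation: a jointly measurable, translation-equivariant map
`Ω × G → G ∪ {∞}`, where `∞` is modeled by `none`. -/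
def IsAllocation (P : Measure Ω) (θ : G → Ω → Ω) (τ : Ω → G → Option G) : Prop :=
  Measurable (fun p : Ω × G => τ p.1 p.2) ∧
    ∀ᵐ ω ∂P, ∀ x y : G, τ (θ y ω) (x - y) = Option.map (fun z => z - y) (τ ω x)

/-- `τ` balances `ξ` and `η`: a.s. no `ξ`-mass is sent to `∞` and the image of
`ξ(ω)` under `τ(ω, ·)` is `η(ω)`. -/
def Balances (P : Measure Ω) (ξ η : Ω → Measure G) (τ : Ω → G → Option G) : Prop :=
  ∀ᵐ ω ∂P, ξ ω {z | τ ω z = none} = 0 ∧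
    ∀ C : Set G, MeasurableSet C → ξ ω {z | ∃ y ∈ C, τ ω z = some y} = η ω C

/-- Euclidean space `ℝ^d`. -/
abbrev Rd (d : ℕ) := EuclideanSpace ℝ (Fin d)

/-- The unit cube `[0,1]^d`. -/
def unitCube (d : ℕ) : Set (Rd d) := {x | ∀ i, x i ∈ Set.Icc (0 : ℝ) 1}

/-- The intensity `λ_ξ = E ξ([0,1]^d)` of a random measure on `ℝ^d`. -/
def intensity {d : ℕ} (P : Measure Ω) (ξ : Ω → Measure (Rd d)) : ℝ≥0∞ :=
  ∫⁻ ω, ξ ω (unitCube d) ∂P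


open ProbabilityTheory Set Metric

/-! ### Perfect modifications of stationary random measures -/

/-- A kernel that is locally finite and flow-covariant for *every* `ω`, without exceptional
null sets. -/
structure IsPerfect {d : ℕ} (θ : Rd d → Ω → Ω) (κ : Kernel Ω (Rd d)) : Prop where
  fin : ∀ ω (n : ℕ), κ ω (closedBall 0 n) < ∞
  inv : ∀ ω z, κ (θ z ω) = (κ ω).map (fun y => y - z)

lemma isSFiniteKernel_of_isFiniteMeasure {α β : Type*} [MeasurableSpace α] [MeasurableSpace β]
    (κ : Kernel α β) (h : ∀ a, κ a univ < ∞) : IsSFiniteKernel κ := by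
  classical
  -- split `α` according to the integer part of the total mass
  set lev : α → ℕ := fun a => ⌊(κ a univ).toReal⌋₊ with hlev
  have hlevm : Measurable lev :=
    Nat.measurable_floor.comp (κ.measurable_coe MeasurableSet.univ).ennreal_toReal
  have hs : ∀ n, MeasurableSet (lev ⁻¹' {n}) := fun n => hlevm (measurableSet_singleton n)
  have hsum : κ = Kernel.sum (fun n => Kernel.piecewise (hs n) κ 0) := by
    ext a s hs'
    rw [Kernel.sum_apply' _ _ hs', tsum_eq_single (lev a)]
    · simp [Kernel.piecewise_apply]
    · intro n hn
      simp [Kernel.piecewise_apply, Ne.symm hn]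
  have hfin : ∀ n, IsFiniteKernel (Kernel.piecewise (hs n) κ 0) := by
    intro n
    refine ⟨⟨(n : ℝ≥0∞) + 1, by finiteness, fun a => ?_⟩⟩
    rw [Kernel.piecewise_apply]
    split_ifs with ha
    · have h1 : (κ a univ).toReal < n + 1 := by
        have := Nat.lt_floor_add_one (κ a univ).toReal
        have h2 : ⌊(κ a univ).toReal⌋₊ = n := ha
        rwa [h2] at this
      rw [← ENNReal.ofReal_toReal (h a).ne]
      calc ENNReal.ofReal (κ a univ).toReal ≤ ENNReal.ofReal (n + 1) :=
            ENNReal.ofReal_le_ofReal h1.le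
        _ = (n : ℝ≥0∞) + 1 := by
            rw [ENNReal.ofReal_add (by positivity) (by positivity)]; simp
    · simp
  rw [hsum]
  infer_instance

lemma isSFiniteKernel_of_closedBall {α : Type*} [MeasurableSpace α] {d : ℕ}
    (κ : Kernel α (Rd d)) (h : ∀ a (n : ℕ), κ a (closedBall 0 n) < ∞) : IsSFiniteKernel κ := by
  have hB : ∀ n : ℕ, MeasurableSet (disjointed (fun n : ℕ => closedBall (0 : Rd d) n) n) :=
    fun n => MeasurableSet.disjointed (fun n => measurableSet_closedBall) n
  have hU : ⋃ n, disjointed (fun n : ℕ => closedBall (0 : Rd d) n) n = univ := by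
    rw [iUnion_disjointed, iUnion_closedBall_nat]
  have hsum : κ = Kernel.sum (fun n => Kernel.restrict κ (hB n)) := by
    ext a s hs
    rw [Kernel.sum_apply' _ _ hs]
    simp_rw [Kernel.restrict_apply' _ _ _ hs]
    rw [← measure_iUnion, ← inter_iUnion, hU, inter_univ]
    · intro i j hij
      exact ((disjoint_disjointed _ hij).mono inter_subset_right inter_subset_right)
    · exact fun i => hs.inter (hB i)
  have hfin : ∀ n, IsSFiniteKernel (Kernel.restrict κ (hB n)) := fun n => by
    refine isSFiniteKernel_of_isFiniteMeasure _ fun a => ?_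
    rw [Kernel.restrict_apply' _ _ _ MeasurableSet.univ, univ_inter]
    exact (measure_mono (disjointed_subset _ n)).trans_lt (h a n)
  rw [hsum]
  infer_instance

/-- Masses of measurable families of sections depend measurably on the parameter. -/
lemma measurable_kernel_section {α β : Type*} [MeasurableSpace α] [MeasurableSpace β]
    (κ : Kernel Ω β) [IsSFiniteKernel κ] {f : α → Ω} (hf : Measurable f) {S : α → β → Prop}
    (hS : MeasurableSet {p : α × β | S p.1 p.2}) : Measurable fun a => κ (f a) {x | S a x} :=
  Kernel.measurable_kernel_prodMk_left (κ := κ.comap f hf) hS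

/-- The countable determining class used to compare locally finite measures on `ℝ^d`: pieces of
balls cut out by a Borel embedding into the line. -/
def testSet {d : ℕ} (i : ℕ × ℚ × ℚ) : Set (Rd d) :=
  closedBall 0 i.1 ∩ embeddingReal (Rd d) ⁻¹' Ioo (i.2.1 : ℝ) i.2.2

lemma measurableSet_testSet {d : ℕ} (i : ℕ × ℚ × ℚ) : MeasurableSet (testSet i : Set (Rd d)) :=
  measurableSet_closedBall.inter
    ((measurableEmbedding_embeddingReal (Rd d)).measurable measurableSet_Ioo)

lemma ext_of_testSet {d : ℕ} {μ ν : Measure (Rd d)} (hμ : ∀ n : ℕ, μ (closedBall 0 n) < ∞)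
    (h : ∀ i, μ (testSet i) = ν (testSet i)) : μ = ν := by
  have he := measurableEmbedding_embeddingReal (Rd d)
  have key : ∀ n : ℕ, μ.restrict (closedBall 0 n) = ν.restrict (closedBall 0 n) := by
    intro n
    have : IsFiniteMeasure (μ.restrict (closedBall 0 n)) := ⟨by simpa using hμ n⟩
    have : (μ.restrict (closedBall 0 n)).map (embeddingReal (Rd d))
        = (ν.restrict (closedBall 0 n)).map (embeddingReal (Rd d)) := by
      apply Real.measure_ext_Ioo_rat
      intro a b
      rw [he.map_apply, he.map_apply, Measure.restrict_apply (he.measurable measurableSet_Ioo),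
        Measure.restrict_apply (he.measurable measurableSet_Ioo), inter_comm]
      exact h (n, a, b)
    rw [← he.comap_map (μ.restrict (closedBall 0 n)), this, he.comap_map]
  exact Measure.ext_of_iUnion_eq_univ (iUnion_closedBall_nat 0) key

lemma map_sub_add {d : ℕ} (μ : Measure (Rd d)) (z : Rd d) :
    (μ.map (fun y => y - z)).map (fun y => y + z) = μ := by
  rw [Measure.map_map (by fun_prop) (by fun_prop)]
  simp [Function.comp_def]

lemma closedBall_map_lt_top {d : ℕ} {μ : Measure (Rd d)} (hμ : ∀ n : ℕ, μ (closedBall 0 n) < ∞)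
    {s : Set (Rd d)} (hs : Bornology.IsBounded s) : μ s < ∞ := by
  obtain ⟨r, hr⟩ := hs.subset_closedBall 0
  obtain ⟨n, hn⟩ := exists_nat_ge r
  exact (measure_mono (hr.trans (closedBall_subset_closedBall hn))).trans_lt (hμ n)

lemma map_sub_fin {d : ℕ} {μ : Measure (Rd d)} (hμ : ∀ n : ℕ, μ (closedBall 0 n) < ∞)
    (z : Rd d) (n : ℕ) : (μ.map (fun y => y - z)) (closedBall 0 n) < ∞ := by
  rw [Measure.map_apply (by fun_prop) measurableSet_closedBall]
  refine closedBall_map_lt_top hμ ((isBounded_closedBall (x := z) (r := n)).subset ?_)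
  intro y hy
  simpa [dist_eq_norm] using hy

/-- **Perfect modification.** A random measure which is flow-covariant up to null sets depending
on the shift agrees a.s. with a kernel that is covariant everywhere: average the
shifted-back measures over a ball of shifts, on the invariant event where these measures do not
depend on the shift (up to Lebesgue-null sets of shifts). -/
lemma exists_perfect_modification {d : ℕ} (P : Measure Ω) [IsProbabilityMeasure P]
    (θ : Rd d → Ω → Ω) (hflow : IsMeasurableFlow θ) (hstat : IsStationary P θ)
    (ξ : Ω → Measure (Rd d)) (hξ : IsRandomMeasure P ξ) (hinv : IsFlowInvariant P θ ξ) :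
    ∃ κ : Kernel Ω (Rd d), IsPerfect θ κ ∧ ∀ᵐ ω ∂P, κ ω = ξ ω := by
  classical
  have hθm : ∀ x, Measurable (θ x) := fun x => hflow.measurable.comp (measurable_const.prodMk measurable_id)
  -- first make the measures locally finite everywhere
  let Ω₁ : Set Ω := {ω | ∀ n : ℕ, ξ ω (closedBall 0 n) < ∞}
  have hΩ₁ : MeasurableSet Ω₁ := by
    have : Ω₁ = ⋂ n : ℕ, {ω | ξ ω (closedBall 0 n) < ∞} := by ext; simp [Ω₁]
    rw [this]
    exact MeasurableSet.iInter fun n =>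
      measurableSet_lt (hξ.1 _ measurableSet_closedBall) measurable_const
  let ξ₁ : Kernel Ω (Rd d) :=
    Kernel.piecewise hΩ₁ ⟨ξ, Measure.measurable_of_measurable_coe _ fun s hs => hξ.1 s hs⟩ 0
  have hξ₁ξ : ∀ᵐ ω ∂P, ξ₁ ω = ξ ω := by
    filter_upwards [hξ.2] with ω hω
    have : ω ∈ Ω₁ := fun n => hω _ (isCompact_closedBall 0 n)
    simp only [ξ₁, Kernel.piecewise_apply, if_pos this]
    rfl
  have hfin₁ : ∀ ω (n : ℕ), ξ₁ ω (closedBall 0 n) < ∞ := by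
    intro ω n
    simp only [ξ₁, Kernel.piecewise_apply]
    split_ifs with h
    · exact h n
    · simp
  have hinv₁ : ∀ x, ∀ᵐ ω ∂P, ξ₁ (θ x ω) = (ξ₁ ω).map (fun y => y - x) := by
    intro x
    have hq : ∀ᵐ ω ∂P, ξ₁ (θ x ω) = ξ (θ x ω) := by
      have h1 : ∀ᵐ ω ∂(P.map (θ x)), ξ₁ ω = ξ ω := by rwa [hstat x]
      exact ae_of_ae_map (hθm x).aemeasurable h1
    filter_upwards [hq, hξ₁ξ, hinv x] with ω h1 h2 h3
    rw [h1, h2, h3]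
  have : IsSFiniteKernel ξ₁ := isSFiniteKernel_of_closedBall ξ₁ hfin₁
  -- the shifted-back measures, a.s. equal to `ξ₁ ω` for each fixed shift `x`
  let K : Ω → Rd d → Measure (Rd d) := fun ω x => (ξ₁ (θ x ω)).map (fun y => y + x)
  have hKm : ∀ s, MeasurableSet s → Measurable fun p : Ω × Rd d => K p.1 p.2 s := by
    intro s hs
    have h1 : (fun p : Ω × Rd d => K p.1 p.2 s)
        = fun p : Ω × Rd d => ξ₁ (θ p.2 p.1) {y | y + p.2 ∈ s} := by
      funext p
      exact Measure.map_apply (by fun_prop) hs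
    rw [h1]
    refine measurable_kernel_section ξ₁ (f := fun p : Ω × Rd d => θ p.2 p.1)
      (S := fun p y => y + p.2 ∈ s) (hflow.measurable.comp measurable_swap) ?_
    have : Measurable fun q : (Ω × Rd d) × Rd d => q.2 + q.1.2 := by fun_prop
    exact this hs
  have hKmeas : ∀ ω, Measurable (K ω) := fun ω =>
    Measure.measurable_of_measurable_coe _ fun s hs => (hKm s hs).comp measurable_prodMk_left
  have hKshift : ∀ ω x z, K (θ z ω) x = (K ω (x + z)).map (fun y => y - z) := by
    intro ω x z
    have h1 : θ x (θ z ω) = θ (x + z) ω := congrFun (hflow.comp x z) ω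
    simp only [K, h1]
    rw [Measure.map_map (by fun_prop) (by fun_prop)]
    congr 1
    funext y
    simp only [Function.comp]
    abel
  let W : Set (Rd d) := closedBall 0 1
  let γ : Measure (Rd d) := cond volume W
  have : IsProbabilityMeasure γ := by
    refine cond_isProbabilityMeasure_of_finite ?_ ?_
    · exact (measure_closedBall_pos _ _ one_pos).ne'
    · exact measure_closedBall_lt_top.ne
  have hγ : γ ≪ volume := cond_absolutelyContinuous
  let avg : Ω → Measure (Rd d) := fun ω => γ.bind (K ω)
  have havgm : ∀ s, MeasurableSet s → Measurable fun ω => avg ω s := by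
    intro s hs
    have : (fun ω => avg ω s) = fun ω => ∫⁻ x, K ω x s ∂γ := by
      funext ω
      exact Measure.bind_apply hs (hKmeas ω).aemeasurable
    rw [this]
    exact (hKm s hs).lintegral_prod_right'
  have havg : ∀ ω μ, (∀ᵐ x ∂(volume : Measure (Rd d)), K ω x = μ) → avg ω = μ := by
    intro ω μ h
    ext s hs
    rw [show avg ω s = ∫⁻ x, K ω x s ∂γ from Measure.bind_apply hs (hKmeas ω).aemeasurable]
    have : ∀ᵐ x ∂γ, K ω x s = μ s := by
      filter_upwards [hγ.ae_le h] with x hx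
      rw [hx]
    rw [lintegral_congr_ae this]
    simp
  -- `G` is the event that a.e. shifted-back measure equals one locally finite measure; the countable
  -- class of test sets makes it measurable, and it is invariant by translation invariance of `volume`
  let G : Set Ω := {ω | volume {x | ¬ ∀ i, K ω x (testSet i) = avg ω (testSet i)} = 0}
    ∩ {ω | ∀ n : ℕ, avg ω (closedBall 0 n) < ∞}
  have hG : MeasurableSet G := by
    apply MeasurableSet.inter
    · have hS : MeasurableSet
          {p : Ω × Rd d | ¬ ∀ i, K p.1 p.2 (testSet i) = avg p.1 (testSet i)} := by
        refine MeasurableSet.compl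
          (s := {p : Ω × Rd d | ∀ i, K p.1 p.2 (testSet i) = avg p.1 (testSet i)}) ?_
        have : {p : Ω × Rd d | ∀ i, K p.1 p.2 (testSet i) = avg p.1 (testSet i)}
          = ⋂ i, {p : Ω × Rd d | K p.1 p.2 (testSet i) = avg p.1 (testSet i)} := by
            ext; simp
        rw [this]
        exact MeasurableSet.iInter fun i => measurableSet_eq_fun (hKm _ (measurableSet_testSet i))
          ((havgm _ (measurableSet_testSet i)).comp measurable_fst)
      exact (measurable_measure_prodMk_left (ν := (volume : Measure (Rd d))) hS)
        (measurableSet_singleton 0)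
    · have : {ω | ∀ n : ℕ, avg ω (closedBall 0 n) < ∞}
        = ⋂ n : ℕ, {ω | avg ω (closedBall 0 n) < ∞} := by ext; simp
      rw [this]
      exact MeasurableSet.iInter fun n =>
        measurableSet_lt (havgm _ measurableSet_closedBall) measurable_const
  have hGiff : ∀ ω, ω ∈ G ↔ ∃ μ : Measure (Rd d), (∀ n : ℕ, μ (closedBall 0 n) < ∞) ∧
      ∀ᵐ x ∂(volume : Measure (Rd d)), K ω x = μ := by
    intro ω
    constructor
    · rintro ⟨h1, h2⟩
      refine ⟨avg ω, h2, ?_⟩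
      have h1' : ∀ᵐ x ∂(volume : Measure (Rd d)),
        ∀ i, K ω x (testSet i) = avg ω (testSet i) := h1
      filter_upwards [h1'] with x hx
      exact (ext_of_testSet h2 fun i => (hx i).symm).symm
    · rintro ⟨μ, h1, h2⟩
      have h3 := havg ω μ h2
      refine ⟨?_, ?_⟩
      · have : ∀ᵐ x ∂(volume : Measure (Rd d)),
          ∀ i, K ω x (testSet i) = avg ω (testSet i) := by
          filter_upwards [h2] with x hx i
          rw [hx, h3]
        exact this
      · intro n
        rw [h3]
        exact h1 n
  have hGfwd : ∀ ω z, ω ∈ G → θ z ω ∈ G ∧ avg (θ z ω) = (avg ω).map (fun y => y - z) := by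
    intro ω z hω
    obtain ⟨μ, h1, h2⟩ := (hGiff ω).1 hω
    have h3 : ∀ᵐ x ∂(volume : Measure (Rd d)), K (θ z ω) x = μ.map (fun y => y - z) := by
      have := (measurePreserving_add_right (volume : Measure (Rd d)) z).quasiMeasurePreserving.ae h2
      filter_upwards [this] with x hx
      rw [hKshift, hx]
    refine ⟨(hGiff _).2 ⟨_, map_sub_fin h1 z, h3⟩, ?_⟩
    rw [havg _ _ h3, havg _ _ h2]
  have hGinv : ∀ ω z, θ z ω ∈ G ↔ ω ∈ G := by
    intro ω z
    refine ⟨fun h => ?_, fun h => (hGfwd ω z h).1⟩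
    have h1 := (hGfwd _ (-z) h).1
    have h2 : θ (-z) (θ z ω) = ω := by
      have := congrFun (hflow.comp (-z) z) ω
      simpa [hflow.id_eq] using this
    rwa [h2] at h1
  refine ⟨Kernel.piecewise hG ⟨avg, Measure.measurable_of_measurable_coe _ havgm⟩ 0, ⟨?_, ?_⟩, ?_⟩
  · intro ω n
    rw [Kernel.piecewise_apply]
    split_ifs with h
    · exact h.2 n
    · simp
  · intro ω z
    rw [Kernel.piecewise_apply, Kernel.piecewise_apply]
    by_cases h : ω ∈ G
    · rw [if_pos h, if_pos ((hGinv ω z).2 h)]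
      exact (hGfwd ω z h).2
    · rw [if_neg h, if_neg (fun h' => h ((hGinv ω z).1 h'))]
      simp
  -- Fubini exchanges the null sets of `P`, one for each shift, with null sets of shifts
  · have hswap : ∀ᵐ ω ∂P, ∀ᵐ x ∂(volume : Measure (Rd d)),
        ∀ i, K ω x (testSet i) = ξ₁ ω (testSet i) := by
      rw [Measure.ae_ae_comm]
      · refine Filter.Eventually.of_forall fun x => ?_
        filter_upwards [hinv₁ x] with ω hω i
        simp only [K, hω, map_sub_add]
      · have : {p : Ω × Rd d | ∀ i, K p.1 p.2 (testSet i) = ξ₁ p.1 (testSet i)}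
          = ⋂ i, {p : Ω × Rd d | K p.1 p.2 (testSet i) = ξ₁ p.1 (testSet i)} := by
            ext; simp
        rw [this]
        exact MeasurableSet.iInter fun i => measurableSet_eq_fun (hKm _ (measurableSet_testSet i))
          ((ξ₁.measurable_coe (measurableSet_testSet i)).comp measurable_fst)
    filter_upwards [hswap, hξ₁ξ] with ω h1 h2
    have h3 : ∀ᵐ x ∂(volume : Measure (Rd d)), K ω x = ξ₁ ω := by
      filter_upwards [h1] with x hx
      exact (ext_of_testSet (hfin₁ ω) fun i => (hx i).symm).symm
    have h4 : ω ∈ G := (hGiff ω).2 ⟨_, hfin₁ ω, h3⟩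
    rw [Kernel.piecewise_apply, if_pos h4, ← h2]
    exact havg _ _ h3

/-! ### Filling an atom from an ordered supply -/

/-- Let in the points of a supply `S` in the order of `f` as long as the admitted mass stays below
`R`: no more than `R` is admitted. -/
lemma admitted_le {α : Type*} [MeasurableSpace α] {μ : Measure α} {S : Set α}
    (hSfin : μ S ≠ ∞) {f : α → ℝ} (hf : Measurable f) (R : ℝ≥0∞) :
    μ {x | x ∈ S ∧ μ {x' | x' ∈ S ∧ f x' ≤ f x} ≤ R} ≤ R := by
  have : IsFiniteMeasure (μ.restrict S) := ⟨by simpa using hSfin.lt_top⟩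
  set ν : Measure ℝ := (μ.restrict S).map f with hν
  have hIic : ∀ t, ν (Iic t) = μ {x' | x' ∈ S ∧ f x' ≤ t} := fun t => by
    rw [hν, Measure.map_apply hf measurableSet_Iic,
      Measure.restrict_apply (hf measurableSet_Iic), inter_comm]
    rfl
  set I : Set ℝ := {t | ν (Iic t) ≤ R} with hI
  have hIlow : IsLowerSet I := fun a b hba ha => (measure_mono (Iic_subset_Iic.2 hba)).trans ha
  have hIm : MeasurableSet I := hIlow.ordConnected.measurableSet
  have hνI : ν I = μ {x | x ∈ S ∧ μ {x' | x' ∈ S ∧ f x' ≤ f x} ≤ R} := by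
    rw [hν, Measure.map_apply hf hIm, Measure.restrict_apply (hf hIm), inter_comm]
    simp only [← hIic]
    rfl
  rw [← hνI, hIm.measure_eq_iSup_isCompact]
  refine iSup₂_le fun K hKI => iSup_le fun hK => ?_
  rcases K.eq_empty_or_nonempty with rfl | hne
  · simp
  · obtain ⟨t, ht⟩ := hK.exists_isGreatest hne
    exact (measure_mono fun s hs => ht.2 hs).trans (hKI ht.1)

/-- With a diffuse supply and an injective order, if some point is rejected then the
admitted mass is at least `R`. -/
lemma le_admitted {α : Type*} [MeasurableSpace α] [MeasurableSingletonClass α]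
    {μ : Measure α} {S : Set α}
    (hSfin : μ S ≠ ∞) {f : α → ℝ} (hf : Measurable f)
    (hinj : Function.Injective f) (hdiff : ∀ x, μ {x} = 0) {R : ℝ≥0∞} {x₀ : α}
    (hx₀ : R < μ {x' | x' ∈ S ∧ f x' ≤ f x₀}) :
    R ≤ μ {x | x ∈ S ∧ μ {x' | x' ∈ S ∧ f x' ≤ f x} ≤ R} := by
  have : IsFiniteMeasure (μ.restrict S) := ⟨by simpa using hSfin.lt_top⟩
  set ν : Measure ℝ := (μ.restrict S).map f with hν
  have hIic : ∀ t, ν (Iic t) = μ {x' | x' ∈ S ∧ f x' ≤ t} := fun t => by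
    rw [hν, Measure.map_apply hf measurableSet_Iic,
      Measure.restrict_apply (hf measurableSet_Iic), inter_comm]
    rfl
  set I : Set ℝ := {t | ν (Iic t) ≤ R} with hI
  have hIlow : IsLowerSet I := fun a b hba ha => (measure_mono (Iic_subset_Iic.2 hba)).trans ha
  have hIm : MeasurableSet I := hIlow.ordConnected.measurableSet
  have hνI : ν I = μ {x | x ∈ S ∧ μ {x' | x' ∈ S ∧ f x' ≤ f x} ≤ R} := by
    rw [hν, Measure.map_apply hf hIm, Measure.restrict_apply (hf hIm), inter_comm]
    simp only [← hIic]
    rfl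
  rw [← hIic] at hx₀
  have hRuniv : R ≤ ν univ := hx₀.le.trans (measure_mono (subset_univ _))
  have hatom : ∀ t, ν {t} = 0 := by
    intro t
    rw [hν, Measure.map_apply hf (measurableSet_singleton t)]
    refine le_antisymm ((Measure.restrict_apply_le _ _).trans ?_) zero_le
    have hsub : (f ⁻¹' {t}).Subsingleton := fun a ha b hb => hinj (ha.trans hb.symm)
    rcases hsub.eq_empty_or_singleton with h | ⟨a, h⟩
    · simp [h]
    · simp [h, hdiff]
  have hcompl : ν Iᶜ ≤ ν univ - R := by
    rw [hIm.compl.measure_eq_iSup_isCompact]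
    refine iSup₂_le fun K hKI => iSup_le fun hK => ?_
    rcases K.eq_empty_or_nonempty with rfl | hne
    · simp
    · obtain ⟨t, ht⟩ := hK.exists_isLeast hne
      have htR : R < ν (Iic t) := not_le.1 (hKI ht.1)
      have hIio : ν (Iic t) ≤ ν (Iio t) := by
        rw [← Iio_union_right]
        exact (measure_union_le _ _).trans (by simp [hatom])
      calc ν K ≤ ν (Ici t) := measure_mono fun s hs => ht.2 hs
        _ = ν univ - ν (Iio t) := by
          rw [← compl_Iio, measure_compl measurableSet_Iio (measure_ne_top _ _)]
        _ ≤ ν univ - R := tsub_le_tsub_left (htR.le.trans hIio) _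
  rw [← hνI, ← compl_compl I, measure_compl hIm.compl (measure_ne_top _ _)]
  calc R = ν univ - (ν univ - R) := (ENNReal.sub_sub_cancel (measure_ne_top _ _) hRuniv).symm
    _ ≤ _ := tsub_le_tsub_left hcompl _

/-! ### One round of the greedy allocation -/

lemma IsPerfect.apply {d : ℕ} {θ : Rd d → Ω → Ω} {κ : Kernel Ω (Rd d)} (h : IsPerfect θ κ)
    (ω : Ω) (z : Rd d) (s : Set (Rd d)) : κ (θ z ω) s = κ ω {y | y - z ∈ s} := by
  rw [h.inv]
  exact (MeasurableEquiv.subRight z).measurableEmbedding.map_apply _ _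

lemma IsPerfect.lt_top {d : ℕ} {θ : Rd d → Ω → Ω} {κ : Kernel Ω (Rd d)} (h : IsPerfect θ κ)
    (ω : Ω) {s : Set (Rd d)} (hs : Bornology.IsBounded s) : κ ω s < ∞ :=
  closedBall_map_lt_top (h.fin ω) hs

lemma IsPerfect.isSFiniteKernel {d : ℕ} {θ : Rd d → Ω → Ω} {κ : Kernel Ω (Rd d)}
    (h : IsPerfect θ κ) : IsSFiniteKernel κ :=
  isSFiniteKernel_of_closedBall κ h.fin

section Step

variable {d : ℕ} (ξ η : Kernel Ω (Rd d))

/-- The demand of `y` not yet met by the relation `T`, where `T ω x y` says that the site `x` has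
been allocated to the atom `y`. -/
def residual (T : Ω → Rd d → Rd d → Prop) (ω : Ω) (y : Rd d) : ℝ≥0∞ :=
  η ω {y} - ξ ω {x | T ω x y}

/-- In the round with displacement window `D` and threshold `r`, the unallocated site `x` applies
to `y` if `y` is the only point of `x + D` with residual demand above `r`. Points with positive
residual demand are atoms of `η`, so that both the uniqueness of `y` and the fact that `x` is
unallocated can be expressed by null sets of `η`. -/
def Applies (D : Set (Rd d)) (r : ℝ≥0∞) (T : Ω → Rd d → Rd d → Prop) (ω : Ω) (x y : Rd d) : Prop :=
  η ω {y' | T ω x y'} = 0 ∧ r < residual ξ η T ω y ∧ y - x ∈ D ∧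
    η ω {y' | r < residual ξ η T ω y' ∧ y' - x ∈ D ∧ y' ≠ y} = 0

/-- The atom `y` accepts its applicants in the order of a Borel embedding of the displacement into
the line, as long as the residual demand is not exceeded. -/
def Accepts (D : Set (Rd d)) (r : ℝ≥0∞) (T : Ω → Rd d → Rd d → Prop) (ω : Ω) (x y : Rd d) : Prop :=
  Applies ξ η D r T ω x y ∧
    ξ ω {x' | Applies ξ η D r T ω x' y ∧
      embeddingReal (Rd d) (x' - y) ≤ embeddingReal (Rd d) (x - y)} ≤ residual ξ η T ω y

/-- The relation `T` enlarged by the acceptances of one round. -/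
def greedyStep (D : Set (Rd d)) (r : ℝ≥0∞) (T : Ω → Rd d → Rd d → Prop) (ω : Ω) (x y : Rd d) :
    Prop :=
  T ω x y ∨ Accepts ξ η D r T ω x y

/-- Measurable, flow-covariant partial allocations of `ξ` to atoms of `η` that never exceed the
demand, written as relations. -/
structure IsPartialAllocation (θ : Rd d → Ω → Ω) (T : Ω → Rd d → Rd d → Prop) : Prop where
  meas : MeasurableSet {p : (Ω × Rd d) × Rd d | T p.1.1 p.1.2 p.2}
  covariant : ∀ ω z x y, T (θ z ω) (x - z) (y - z) ↔ T ω x y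
  func : ∀ ω x y y', T ω x y → T ω x y' → y = y'
  pos : ∀ ω x y, T ω x y → 0 < η ω {y}
  le : ∀ ω y, ξ ω {x | T ω x y} ≤ η ω {y}

variable {ξ η} {θ : Rd d → Ω → Ω} {T : Ω → Rd d → Rd d → Prop}

lemma measurable_residual [IsSFiniteKernel ξ] [IsSFiniteKernel η]
    (hT : IsPartialAllocation ξ η θ T) :
    Measurable fun q : Ω × Rd d => residual ξ η T q.1 q.2 := by
  refine Measurable.sub ?_ ?_
  · refine measurable_kernel_section η (f := Prod.fst) (S := fun q x => x = q.2) measurable_fst ?_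
    exact measurableSet_eq_fun (by fun_prop) (by fun_prop)
  · refine measurable_kernel_section ξ (f := Prod.fst) (S := fun q x => T q.1 x q.2)
      measurable_fst ?_
    have : Measurable fun p : (Ω × Rd d) × Rd d => ((p.1.1, p.2), p.1.2) := by fun_prop
    exact this hT.meas

lemma measurableSet_applies [IsSFiniteKernel ξ] [IsSFiniteKernel η]
    (hT : IsPartialAllocation ξ η θ T) {D : Set (Rd d)} (hD : MeasurableSet D) (r : ℝ≥0∞) :
    MeasurableSet {p : (Ω × Rd d) × Rd d | Applies ξ η D r T p.1.1 p.1.2 p.2} := by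
  have hres := measurable_residual hT
  have h1 : Measurable fun q : Ω × Rd d => η q.1 {y | T q.1 q.2 y} :=
    measurable_kernel_section η (f := Prod.fst) (S := fun q y => T q.1 q.2 y) measurable_fst hT.meas
  have h2 : Measurable fun p : (Ω × Rd d) × Rd d =>
      η p.1.1 {y' | r < residual ξ η T p.1.1 y' ∧ y' - p.1.2 ∈ D ∧ y' ≠ p.2} := by
    refine measurable_kernel_section η (f := fun p : (Ω × Rd d) × Rd d => p.1.1)
      (S := fun p y' => r < residual ξ η T p.1.1 y' ∧ y' - p.1.2 ∈ D ∧ y' ≠ p.2) (by fun_prop) ?_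
    refine MeasurableSet.inter ?_ (MeasurableSet.inter ?_ ?_)
    · have : Measurable fun q : ((Ω × Rd d) × Rd d) × Rd d => (q.1.1.1, q.2) := by fun_prop
      exact measurableSet_lt measurable_const (hres.comp this)
    · have : Measurable fun q : ((Ω × Rd d) × Rd d) × Rd d => q.2 - q.1.1.2 := by fun_prop
      exact this hD
    · exact (measurableSet_eq_fun (f := fun q : ((Ω × Rd d) × Rd d) × Rd d => q.2)
        (g := fun q => q.1.2) (by fun_prop) (by fun_prop)).compl
  refine MeasurableSet.inter ?_ (MeasurableSet.inter ?_ (MeasurableSet.inter ?_ ?_))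
  · exact measurableSet_eq_fun (h1.comp measurable_fst) measurable_const
  · have : Measurable fun q : (Ω × Rd d) × Rd d => (q.1.1, q.2) := by fun_prop
    exact measurableSet_lt measurable_const (hres.comp this)
  · have : Measurable fun q : (Ω × Rd d) × Rd d => q.2 - q.1.2 := by fun_prop
    exact this hD
  · exact measurableSet_eq_fun h2 measurable_const

lemma measurableSet_accepts [IsSFiniteKernel ξ] [IsSFiniteKernel η]
    (hT : IsPartialAllocation ξ η θ T) {D : Set (Rd d)} (hD : MeasurableSet D) (r : ℝ≥0∞) :
    MeasurableSet {p : (Ω × Rd d) × Rd d | Accepts ξ η D r T p.1.1 p.1.2 p.2} := by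
  have happ := measurableSet_applies hT hD r
  have hφ := (measurableEmbedding_embeddingReal (Rd d)).measurable
  have hle : MeasurableSet {p : (Ω × Rd d) × Rd d | ξ p.1.1 {x' | Applies ξ η D r T p.1.1 x' p.2 ∧
      embeddingReal (Rd d) (x' - p.2) ≤ embeddingReal (Rd d) (p.1.2 - p.2)} ≤
        residual ξ η T p.1.1 p.2} := by
    refine measurableSet_le ?_ ?_
    · refine measurable_kernel_section ξ (f := fun p : (Ω × Rd d) × Rd d => p.1.1)
        (S := fun p x' => Applies ξ η D r T p.1.1 x' p.2 ∧
          embeddingReal (Rd d) (x' - p.2) ≤ embeddingReal (Rd d) (p.1.2 - p.2)) (by fun_prop) ?_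
      have h1 : MeasurableSet {q : ((Ω × Rd d) × Rd d) × Rd d | Applies ξ η D r T q.1.1.1 q.2 q.1.2} := by
        have : Measurable fun q : ((Ω × Rd d) × Rd d) × Rd d => ((q.1.1.1, q.2), q.1.2) := by
          fun_prop
        exact this happ
      have h2 : MeasurableSet {q : ((Ω × Rd d) × Rd d) × Rd d |
          embeddingReal (Rd d) (q.2 - q.1.2) ≤ embeddingReal (Rd d) (q.1.1.2 - q.1.2)} :=
        measurableSet_le (hφ.comp (by fun_prop)) (hφ.comp (by fun_prop))
      exact h1.inter h2
    · have : Measurable fun q : (Ω × Rd d) × Rd d => (q.1.1, q.2) := by fun_prop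
      exact (measurable_residual hT).comp this
  exact happ.inter hle

lemma residual_covariant (hξ : IsPerfect θ ξ) (hη : IsPerfect θ η)
    (hT : ∀ ω z x y, T (θ z ω) (x - z) (y - z) ↔ T ω x y) (ω : Ω) (z y : Rd d) :
    residual ξ η T (θ z ω) (y - z) = residual ξ η T ω y := by
  simp [residual, hξ.apply, hη.apply, hT]

lemma applies_covariant (hξ : IsPerfect θ ξ) (hη : IsPerfect θ η)
    (hT : ∀ ω z x y, T (θ z ω) (x - z) (y - z) ↔ T ω x y) (D : Set (Rd d)) (r : ℝ≥0∞)
    (ω : Ω) (z x y : Rd d) :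
    Applies ξ η D r T (θ z ω) (x - z) (y - z) ↔ Applies ξ η D r T ω x y := by
  simp [Applies, hη.apply, hT, residual_covariant hξ hη hT]

lemma accepts_covariant (hξ : IsPerfect θ ξ) (hη : IsPerfect θ η)
    (hT : ∀ ω z x y, T (θ z ω) (x - z) (y - z) ↔ T ω x y) (D : Set (Rd d)) (r : ℝ≥0∞)
    (ω : Ω) (z x y : Rd d) :
    Accepts ξ η D r T (θ z ω) (x - z) (y - z) ↔ Accepts ξ η D r T ω x y := by
  simp [Accepts, hξ.apply, applies_covariant hξ hη hT, residual_covariant hξ hη hT]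

lemma residual_le (ω : Ω) (y : Rd d) : residual ξ η T ω y ≤ η ω {y} := tsub_le_self

lemma applies_unique {D : Set (Rd d)} {r : ℝ≥0∞} {ω : Ω} {x y y' : Rd d}
    (h : Applies ξ η D r T ω x y) (h' : Applies ξ η D r T ω x y') : y = y' := by
  by_contra hne
  have h1 : η ω {y'} = 0 :=
    measure_mono_null (s := {y'})
      (fun a (ha : a = y') => ha ▸ ⟨h'.2.1, h'.2.2.1, fun e => hne e.symm⟩) h.2.2.2
  have h2 : r < η ω {y'} := h'.2.1.trans_le (residual_le ω y')
  simp [h1] at h2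

lemma not_applies_of_allocated (hT : IsPartialAllocation ξ η θ T) {D : Set (Rd d)} {r : ℝ≥0∞}
    {ω : Ω} {x y y' : Rd d} (h : T ω x y) : ¬ Applies ξ η D r T ω x y' := fun h' =>
  (hT.pos ω x y h).ne' (measure_mono_null (singleton_subset_iff.2 h) h'.1)

lemma applicants_ne_top (hξ : IsPerfect θ ξ) {D : Set (Rd d)} (hD : Bornology.IsBounded D)
    (r : ℝ≥0∞) (ω : Ω) (y : Rd d) : ξ ω {x | Applies ξ η D r T ω x y} ≠ ∞ := by
  obtain ⟨c, hc⟩ := hD.subset_closedBall 0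
  refine (hξ.lt_top ω ((isBounded_closedBall (x := y) (r := c)).subset fun x hx => ?_)).ne
  have := hc hx.2.2.1
  rw [mem_closedBall, dist_comm, dist_eq_norm]
  simpa using this

lemma measurable_displacement (y : Rd d) :
    Measurable fun x : Rd d => embeddingReal (Rd d) (x - y) :=
  (measurableEmbedding_embeddingReal (Rd d)).measurable.comp (by fun_prop)

lemma accepted_le (hξ : IsPerfect θ ξ) {D : Set (Rd d)} (hD : Bornology.IsBounded D)
    (r : ℝ≥0∞) (ω : Ω) (y : Rd d) :
    ξ ω {x | Accepts ξ η D r T ω x y} ≤ residual ξ η T ω y :=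
  admitted_le (S := {x | Applies ξ η D r T ω x y}) (applicants_ne_top hξ hD r ω y)
    (measurable_displacement y) _

lemma IsPartialAllocation.greedyStep (hξ : IsPerfect θ ξ) (hη : IsPerfect θ η)
    (hT : IsPartialAllocation ξ η θ T) {D : Set (Rd d)} (hD : MeasurableSet D)
    (hDb : Bornology.IsBounded D) (r : ℝ≥0∞) :
    IsPartialAllocation ξ η θ (greedyStep ξ η D r T) := by
  have := hξ.isSFiniteKernel
  have := hη.isSFiniteKernel
  refine ⟨hT.meas.union (measurableSet_accepts hT hD r), ?_, ?_, ?_, ?_⟩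
  · intro ω z x y
    simp only [Paper.greedyStep, hT.covariant, accepts_covariant hξ hη hT.covariant]
  · rintro ω x y y' (h | h) (h' | h')
    · exact hT.func ω x y y' h h'
    · exact (not_applies_of_allocated hT h h'.1).elim
    · exact (not_applies_of_allocated hT h' h.1).elim
    · exact applies_unique h.1 h'.1
  · rintro ω x y (h | h)
    · exact hT.pos ω x y h
    · exact zero_le.trans_lt (h.1.2.1.trans_le (residual_le ω y))
  · intro ω y
    calc ξ ω {x | Paper.greedyStep ξ η D r T ω x y}
        ≤ ξ ω {x | T ω x y} + ξ ω {x | Accepts ξ η D r T ω x y} := measure_union_le _ _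
      _ ≤ ξ ω {x | T ω x y} + residual ξ η T ω y := by
        gcongr
        exact accepted_le hξ hDb r ω y
      _ = η ω {y} := add_tsub_cancel_of_le (hT.le ω y)

/-- An atom that rejects an applicant is saturated from then on. -/
lemma residual_greedyStep_eq_zero (hξ : IsPerfect θ ξ) (hη : IsPerfect θ η)
    (hT : IsPartialAllocation ξ η θ T) {D : Set (Rd d)} (hD : MeasurableSet D)
    (hDb : Bornology.IsBounded D) {r : ℝ≥0∞} {ω : Ω} (hdiff : ∀ x, ξ ω {x} = 0) {x y : Rd d}
    (h : Applies ξ η D r T ω x y) (h' : ¬ Accepts ξ η D r T ω x y) :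
    residual ξ η (greedyStep ξ η D r T) ω y = 0 := by
  have := hξ.isSFiniteKernel
  have := hη.isSFiniteKernel
  have hlt : residual ξ η T ω y < ξ ω {x' | x' ∈ {x' | Applies ξ η D r T ω x' y} ∧
      embeddingReal (Rd d) (x' - y) ≤ embeddingReal (Rd d) (x - y)} :=
    not_le.1 fun hle => h' ⟨h, hle⟩
  have hge : residual ξ η T ω y ≤ ξ ω {x | Accepts ξ η D r T ω x y} :=
    le_admitted (S := {x | Applies ξ η D r T ω x y}) (applicants_ne_top hξ hDb r ω y)
      (measurable_displacement y)
      (fun a b hab => sub_left_injective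
        ((measurableEmbedding_embeddingReal (Rd d)).injective hab)) hdiff hlt
  have hmeas : MeasurableSet {x | Accepts ξ η D r T ω x y} := by
    have : Measurable fun x : Rd d => ((ω, x), y) := by fun_prop
    exact this (measurableSet_accepts hT hD r)
  have hunion : ξ ω {x | greedyStep ξ η D r T ω x y}
      = ξ ω {x | T ω x y} + ξ ω {x | Accepts ξ η D r T ω x y} := by
    refine measure_union ?_ hmeas
    exact Set.disjoint_left.2 fun a ha ha' => not_applies_of_allocated hT ha ha'.1
  rw [residual, hunion, tsub_eq_zero_iff_le]
  calc η ω {y} = ξ ω {x | T ω x y} + residual ξ η T ω y := (add_tsub_cancel_of_le (hT.le ω y)).symm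
    _ ≤ _ := by gcongr

end Step

/-! ### The greedy allocation -/

section Greedy

variable {d : ℕ} (ξ η : Kernel Ω (Rd d))

/-- The displacement windows: a countable family of balls with dense centres and arbitrarily small
radii. -/
def window (i : ℕ × ℕ × ℕ) : Set (Rd d) :=
  ball (TopologicalSpace.denseSeq (Rd d) i.1) (1 / ((i.2.1 : ℝ) + 1))

/-- The demand thresholds, of the form `1 / (m + 1)`. -/
def threshold (i : ℕ × ℕ × ℕ) : ℝ≥0∞ := ((i.2.2 : ℝ≥0∞) + 1)⁻¹

/-- The partial allocation after `k` rounds; the rounds run once through all pairs of a window and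
a threshold. -/
def greedy : ℕ → Ω → Rd d → Rd d → Prop
  | 0 => fun _ _ _ => False
  | k + 1 => greedyStep ξ η (window (Denumerable.ofNat (ℕ × ℕ × ℕ) k))
      (threshold (Denumerable.ofNat (ℕ × ℕ × ℕ) k)) (greedy k)

/-- The union of all rounds. -/
def greedyLimit (ω : Ω) (x y : Rd d) : Prop := ∃ k, greedy ξ η k ω x y

variable {ξ η} {θ : Rd d → Ω → Ω}

lemma greedy_isPartialAllocation (hξ : IsPerfect θ ξ) (hη : IsPerfect θ η) (k : ℕ) :
    IsPartialAllocation ξ η θ (greedy ξ η k) := by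
  induction k with
  | zero => constructor <;> simp [greedy]
  | succ k ih => exact ih.greedyStep hξ hη measurableSet_ball isBounded_ball _

lemma greedy_mono {j k : ℕ} (hjk : j ≤ k) {ω : Ω} {x y : Rd d} (h : greedy ξ η j ω x y) :
    greedy ξ η k ω x y := by
  induction hjk with
  | refl => exact h
  | step _ ih => exact Or.inl ih

lemma greedyLimit_isPartialAllocation (hξ : IsPerfect θ ξ) (hη : IsPerfect θ η) :
    IsPartialAllocation ξ η θ (greedyLimit ξ η) := by
  have hk := greedy_isPartialAllocation hξ hη
  refine ⟨?_, ?_, ?_, ?_, ?_⟩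
  · have : {p : (Ω × Rd d) × Rd d | greedyLimit ξ η p.1.1 p.1.2 p.2}
        = ⋃ k, {p : (Ω × Rd d) × Rd d | greedy ξ η k p.1.1 p.1.2 p.2} := by
      ext; simp [greedyLimit]
    rw [this]
    exact MeasurableSet.iUnion fun k => (hk k).meas
  · intro ω z x y
    simp only [greedyLimit, (hk _).covariant]
  · rintro ω x y y' ⟨j, hj⟩ ⟨k, hk'⟩
    exact (hk (max j k)).func ω x y y' (greedy_mono (le_max_left _ _) hj)
      (greedy_mono (le_max_right _ _) hk')
  · rintro ω x y ⟨k, h⟩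
    exact (hk k).pos ω x y h
  · intro ω y
    have : {x | greedyLimit ξ η ω x y} = ⋃ k, {x | greedy ξ η k ω x y} := by
      ext; simp [greedyLimit]
    have hmono : Monotone fun k => {x | greedy ξ η k ω x y} := fun j k hjk x hx =>
      greedy_mono hjk hx
    rw [this, hmono.measure_iUnion]
    exact iSup_le fun k => (hk k).le ω y

lemma residual_limit_le (k : ℕ) (ω : Ω) (y : Rd d) :
    residual ξ η (greedyLimit ξ η) ω y ≤ residual ξ η (greedy ξ η k) ω y :=
  tsub_le_tsub_left (measure_mono fun _ (hx : greedy ξ η k ω _ y) => (⟨k, hx⟩ : greedyLimit ξ η ω _ y)) _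

/-- Around a given displacement `y - x` there is a window that isolates `y` from all other atoms
of mass above a given level. -/
lemma exists_window (hη : IsPerfect θ η) (ω : Ω) (x y : Rd d) {r : ℝ≥0∞} (hr : r ≠ 0) :
    ∃ j n : ℕ, ∀ m, y - x ∈ window (j, n, m) ∧
      ∀ y', y' - x ∈ window (j, n, m) → r ≤ η ω {y'} → y' = y := by
  set F : Set (Rd d) := {y' | r ≤ η ω {y'}} ∩ ball y 1 with hF
  have hFfin : F.Finite := by
    by_contra hinf
    have h1 : η ω F = ∞ := Set.Infinite.meas_eq_top hinf ⟨r, hr, fun z hz => hz.1⟩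
    exact (hη.lt_top ω (isBounded_ball.subset inter_subset_right)).ne h1
  have hopen : IsOpen ((F \ {y})ᶜ) := (hFfin.subset sdiff_subset).isClosed.isOpen_compl
  obtain ⟨ε, hε, hball⟩ := Metric.isOpen_iff.1 hopen y (by simp)
  obtain ⟨n, hn⟩ := exists_nat_one_div_lt (show 0 < min ε 1 / 2 by positivity)
  have hpos : (0 : ℝ) < 1 / ((n : ℝ) + 1) := Nat.one_div_pos_of_nat
  obtain ⟨j, hj⟩ := (TopologicalSpace.denseRange_denseSeq (Rd d)).exists_dist_lt (y - x) hpos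
  refine ⟨j, n, fun m => ⟨hj, fun y' hy' hry' => ?_⟩⟩
  by_contra hne
  have hd : dist y' y < min ε 1 := by
    have h1 : dist (y' - x) (y - x) = dist y' y := dist_sub_right _ _ _
    have h2 : dist (y' - x) (TopologicalSpace.denseSeq (Rd d) j) < 1 / ((n : ℝ) + 1) := hy'
    have h3 := dist_triangle_right (y' - x) (y - x) (TopologicalSpace.denseSeq (Rd d) j)
    linarith
  exact hball (mem_ball.2 (hd.trans_le (min_le_left _ _)))
    ⟨⟨hry', mem_ball.2 (hd.trans_le (min_le_right _ _))⟩, hne⟩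

/-- The greedy allocation leaves no pair of an unallocated site and an
unsaturated atom: in the round whose window isolates the atom as seen from the site, the site
applies, and is either accepted or the atom gets saturated. -/
lemma greedyLimit_dichotomy (hξ : IsPerfect θ ξ) (hη : IsPerfect θ η) {ω : Ω}
    (hdiff : ∀ x, ξ ω {x} = 0) {x : Rd d} (hx : ¬ ∃ y, greedyLimit ξ η ω x y) (y : Rd d) :
    residual ξ η (greedyLimit ξ η) ω y = 0 := by
  by_contra hres
  obtain ⟨m, hm⟩ := ENNReal.exists_inv_nat_lt hres
  have hm' : ((m : ℝ≥0∞) + 1)⁻¹ < residual ξ η (greedyLimit ξ η) ω y :=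
    (ENNReal.inv_le_inv.2 le_self_add).trans_lt hm
  have hr : ((m : ℝ≥0∞) + 1)⁻¹ ≠ 0 := ENNReal.inv_ne_zero.2 (by finiteness)
  obtain ⟨j, n, hw⟩ := exists_window hη ω x y hr
  obtain ⟨hyw, huniq⟩ := hw m
  set k := Encodable.encode ((j, n, m) : ℕ × ℕ × ℕ) with hk
  have hofNat : Denumerable.ofNat (ℕ × ℕ × ℕ) k = (j, n, m) := Denumerable.ofNat_encode _
  have hTk := greedy_isPartialAllocation hξ hη k
  have hsucc : greedy ξ η (k + 1) = greedyStep ξ η (window (j, n, m)) (threshold (j, n, m))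
      (greedy ξ η k) := by
    rw [greedy, hofNat]
  have happ : Applies ξ η (window (j, n, m)) (threshold (j, n, m)) (greedy ξ η k) ω x y := by
    refine ⟨?_, hm'.trans_le (residual_limit_le k ω y), hyw, ?_⟩
    · have : {y' | greedy ξ η k ω x y'} = ∅ := by
        ext y'
        simpa using fun h => hx ⟨y', k, h⟩
      simp [this]
    · have : {y' | threshold (j, n, m) < residual ξ η (greedy ξ η k) ω y' ∧
          y' - x ∈ window (j, n, m) ∧ y' ≠ y} = ∅ := by
        ext y'
        simp only [mem_ofPred_eq, mem_empty_iff_false, iff_false]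
        rintro ⟨h1, h2, h3⟩
        exact h3 (huniq y' h2 (h1.le.trans (residual_le ω y')))
      simp [this]
  by_cases hacc : Accepts ξ η (window (j, n, m)) (threshold (j, n, m)) (greedy ξ η k) ω x y
  · exact hx ⟨y, k + 1, by rw [hsucc]; exact Or.inr hacc⟩
  · have h0 : residual ξ η (greedy ξ η (k + 1)) ω y = 0 := by
      rw [hsucc]
      exact residual_greedyStep_eq_zero hξ hη hTk measurableSet_ball isBounded_ball hdiff happ hacc
    exact hres (le_antisymm ((residual_limit_le (k + 1) ω y).trans h0.le) zero_le)

end Greedy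

/-! ### Transported mass -/

section Mass

variable {d : ℕ} {ξ η : Kernel Ω (Rd d)} {θ : Rd d → Ω → Ω} {T : Ω → Rd d → Rd d → Prop}

lemma countable_atoms (hη : IsPerfect θ η) (ω : Ω) : {y | 0 < η ω {y}}.Countable := by
  have := hη.isSFiniteKernel
  exact Measure.countable_meas_pos_of_disjoint_iUnion (μ := η ω) (As := fun y : Rd d => {y})
    (fun y => measurableSet_singleton y) (fun a b hab => disjoint_singleton.2 hab)

lemma measure_atoms (hη : IsPerfect θ η) (ω : Ω) (C : Set (Rd d)) :
    η ω (C ∩ {y | 0 < η ω {y}}) = ∑' y : ↥(C ∩ {y | 0 < η ω {y}}), η ω {(y : Rd d)} := by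
  rw [← measure_biUnion ((countable_atoms hη ω).mono inter_subset_right)
    (fun a _ b _ hab => disjoint_singleton.2 hab) (fun y _ => measurableSet_singleton y),
    biUnion_of_singleton]

lemma mass_eq_tsum (hη : IsPerfect θ η) (hT : IsPartialAllocation ξ η θ T) (ω : Ω)
    (C : Set (Rd d)) :
    ξ ω {x | ∃ y ∈ C, T ω x y} =
      ∑' y : ↥(C ∩ {y | 0 < η ω {y}}), ξ ω {x | T ω x y} := by
  rw [← measure_biUnion (f := fun y => {x | T ω x y})
    ((countable_atoms hη ω).mono inter_subset_right)]
  · congr 1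
    ext x
    simp only [mem_ofPred_eq, mem_iUnion, mem_inter_iff, exists_prop]
    exact ⟨fun ⟨y, hy, h⟩ => ⟨y, ⟨hy, hT.pos ω x y h⟩, h⟩, fun ⟨y, hy, h⟩ => ⟨y, hy.1, h⟩⟩
  · intro a _ b _ hab
    exact Set.disjoint_left.2 fun x hx hx' => hab (hT.func ω x a b hx hx')
  · intro y _
    have : Measurable fun x : Rd d => ((ω, x), y) := by fun_prop
    exact this hT.meas

lemma mass_le (hη : IsPerfect θ η) (hT : IsPartialAllocation ξ η θ T) (ω : Ω) (C : Set (Rd d)) :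
    ξ ω {x | ∃ y ∈ C, T ω x y} ≤ η ω C := by
  rw [mass_eq_tsum hη hT]
  calc _ ≤ ∑' y : ↥(C ∩ {y | 0 < η ω {y}}), η ω {(y : Rd d)} :=
        ENNReal.tsum_le_tsum fun y => hT.le ω y
    _ = η ω (C ∩ {y | 0 < η ω {y}}) := (measure_atoms hη ω C).symm
    _ ≤ η ω C := measure_mono inter_subset_left

lemma mass_eq (hη : IsPerfect θ η) (hT : IsPartialAllocation ξ η θ T) {ω : Ω}
    (hdisc : ∃ s : Set (Rd d), s.Countable ∧ η ω sᶜ = 0)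
    (hres : ∀ y, residual ξ η T ω y = 0) (C : Set (Rd d)) :
    ξ ω {x | ∃ y ∈ C, T ω x y} = η ω C := by
  refine le_antisymm (mass_le hη hT ω C) ?_
  obtain ⟨s, hs, hs0⟩ := hdisc
  have hnull : η ω {y | 0 < η ω {y}}ᶜ = 0 := by
    have hsub : {y | 0 < η ω {y}}ᶜ ⊆ sᶜ ∪ (s ∩ {y | 0 < η ω {y}}ᶜ) := by
      intro y hy
      by_cases h : y ∈ s
      · exact Or.inr ⟨h, hy⟩
      · exact Or.inl h
    refine measure_mono_null hsub (measure_union_null hs0 ?_)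
    rw [← biUnion_of_singleton (s ∩ {y | 0 < η ω {y}}ᶜ)]
    refine (measure_biUnion_null_iff (hs.mono inter_subset_left)).2 fun y hy => ?_
    simpa using hy.2
  rw [mass_eq_tsum hη hT]
  calc η ω C ≤ η ω (C ∩ {y | 0 < η ω {y}}) + η ω {y | 0 < η ω {y}}ᶜ := by
        refine (measure_mono fun y hy => ?_).trans (measure_union_le _ _)
        by_cases h : 0 < η ω {y}
        · exact Or.inl ⟨hy, h⟩
        · exact Or.inr h
    _ = ∑' y : ↥(C ∩ {y | 0 < η ω {y}}), η ω {(y : Rd d)} := by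
        rw [hnull, add_zero, measure_atoms hη]
    _ ≤ _ := ENNReal.tsum_le_tsum fun y => tsub_eq_zero_iff_le.1 (hres y)

/-- If the mass received by a set of finite demand equals that demand, then every point in it is
saturated. -/
lemma residual_eq_zero_of_mass (hη : IsPerfect θ η) (hT : IsPartialAllocation ξ η θ T) {ω : Ω}
    {C : Set (Rd d)} (hC : MeasurableSet C) (hfin : η ω C ≠ ∞)
    (hmass : η ω C ≤ ξ ω {x | ∃ y ∈ C, T ω x y}) {y : Rd d} (hy : y ∈ C) :
    residual ξ η T ω y = 0 := by
  rw [residual, tsub_eq_zero_iff_le]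
  have hfin' : η ω (C \ {y}) ≠ ∞ := measure_ne_top_of_subset sdiff_subset hfin
  have h1 : ξ ω {x | ∃ y' ∈ C, T ω x y'} ≤
      ξ ω {x | T ω x y} + ξ ω {x | ∃ y' ∈ C \ {y}, T ω x y'} := by
    refine (measure_mono ?_).trans (measure_union_le _ _)
    rintro x ⟨y', hy', h⟩
    by_cases e : y' = y
    · exact Or.inl (e ▸ h)
    · exact Or.inr ⟨y', ⟨hy', e⟩, h⟩
  have h2 : η ω {y} + η ω (C \ {y}) ≤ ξ ω {x | T ω x y} + η ω (C \ {y}) := by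
    calc η ω {y} + η ω (C \ {y}) = η ω C := by
          rw [← measure_union disjoint_sdiff_right (hC.diff (measurableSet_singleton y)),
            union_sdiff_cancel (singleton_subset_iff.2 hy)]
      _ ≤ _ := hmass.trans (h1.trans (add_le_add le_rfl (mass_le hη hT ω _)))
  exact (ENNReal.add_le_add_iff_right hfin').1 h2

end Mass

/-! ### Stationarity: mass transport and extension from the unit cube -/

section Stationary

variable {d : ℕ} {ξ η : Kernel Ω (Rd d)} {θ : Rd d → Ω → Ω} {T : Ω → Rd d → Rd d → Prop}

lemma isCompact_unitCube (d : ℕ) : IsCompact (unitCube d) := by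
  have : unitCube d = (fun v : Fin d → ℝ => WithLp.toLp 2 v) '' Icc 0 1 := by
    ext x
    constructor
    · intro hx
      exact ⟨fun i => x i, ⟨fun i => (hx i).1, fun i => (hx i).2⟩, rfl⟩
    · rintro ⟨v, hv, rfl⟩ i
      exact ⟨hv.1 i, hv.2 i⟩
  rw [this]
  exact isCompact_Icc.image (PiLp.continuous_toLp 2 _)

lemma interior_unitCube_nonempty (d : ℕ) : (interior (unitCube d)).Nonempty := by
  refine ⟨WithLp.toLp 2 fun _ => 1 / 2, ?_⟩
  rw [mem_interior]
  refine ⟨{x : Rd d | ∀ i, x i ∈ Ioo (0 : ℝ) 1}, fun x hx i => Ioo_subset_Icc_self (hx i), ?_, ?_⟩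
  · simp only [ofPred_forall]
    refine isOpen_iInter_of_finite fun i => ?_
    have : Continuous fun x : Rd d => x i := by fun_prop
    exact isOpen_Ioo.preimage this
  · intro i
    norm_num

lemma measurable_flow (hflow : IsMeasurableFlow θ) (z : Rd d) : Measurable (θ z) :=
  hflow.measurable.comp (measurable_const.prodMk measurable_id)

/-- A covariant random set that is a.s. null inside the unit cube is a.s. null everywhere. -/
lemma ae_null_of_unitCube {P : Measure Ω} (hflow : IsMeasurableFlow θ) (hstat : IsStationary P θ)
    {κ : Kernel Ω (Rd d)} (hκ : IsPerfect θ κ) {S : Ω → Rd d → Prop}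
    (hScov : ∀ ω z x, S (θ z ω) (x - z) ↔ S ω x)
    (h : ∀ᵐ ω ∂P, κ ω {x | x ∈ unitCube d ∧ S ω x} = 0) : ∀ᵐ ω ∂P, κ ω {x | S ω x} = 0 := by
  have hz : ∀ z : Rd d, ∀ᵐ ω ∂P, κ ω {x | x - z ∈ unitCube d ∧ S ω x} = 0 := by
    intro z
    rw [← hstat z] at h
    filter_upwards [ae_of_ae_map (measurable_flow hflow z).aemeasurable h] with ω hω
    rw [hκ.apply] at hω
    simpa [hScov] using hω
  filter_upwards [ae_all_iff.2 fun n => hz (TopologicalSpace.denseSeq (Rd d) n)] with ω hω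
  refine measure_mono_null (fun x hx => ?_) (measure_iUnion_null hω)
  have hopen : IsOpen {z : Rd d | x - z ∈ interior (unitCube d)} :=
    isOpen_interior.preimage (by fun_prop)
  have hne : {z : Rd d | x - z ∈ interior (unitCube d)}.Nonempty := by
    obtain ⟨c, hc⟩ := interior_unitCube_nonempty d
    exact ⟨x - c, by simpa using hc⟩
  obtain ⟨n, hn⟩ := (TopologicalSpace.denseRange_denseSeq (Rd d)).exists_mem_open hopen hne
  exact mem_iUnion.2 ⟨n, interior_subset hn, hx⟩

lemma lintegral_section_swap (P : Measure Ω) [IsProbabilityMeasure P] (κ : Kernel Ω (Rd d))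
    [IsSFiniteKernel κ] {S : Ω → Rd d → Rd d → Prop}
    (hS : MeasurableSet {p : (Ω × Rd d) × Rd d | S p.1.1 p.1.2 p.2}) :
    ∫⁻ z, ∫⁻ ω, κ ω {x | S ω x z} ∂P ∂(volume : Measure (Rd d))
      = ∫⁻ ω, ∫⁻ x, volume {z | S ω x z} ∂(κ ω) ∂P := by
  have hm : Measurable fun q : Rd d × Ω => κ q.2 {x | S q.2 x q.1} := by
    refine measurable_kernel_section κ (f := Prod.snd) (S := fun q x => S q.2 x q.1)
      measurable_snd ?_
    have : Measurable fun p : (Rd d × Ω) × Rd d => ((p.1.2, p.2), p.1.1) := by fun_prop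
    exact this hS
  rw [lintegral_lintegral_swap hm.aemeasurable]
  refine lintegral_congr fun ω => ?_
  have hSω : MeasurableSet {q : Rd d × Rd d | S ω q.1 q.2} := by
    have : Measurable fun q : Rd d × Rd d => ((ω, q.1), q.2) := by fun_prop
    exact this hS
  exact (Measure.prod_apply_symm (μ := κ ω) (ν := volume) hSω).symm.trans
    (Measure.prod_apply hSω)

/-- Existence of a target inside a measurable set is a measurable event, because targets are
atoms of `η`. -/
lemma measurableSet_exists [IsSFiniteKernel η] (hT : IsPartialAllocation ξ η θ T) {α : Type*}
    [MeasurableSpace α] {f : α → Ω} {g : α → Rd d} (hf : Measurable f) (hg : Measurable g)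
    {C : α → Rd d → Prop} (hC : MeasurableSet {p : α × Rd d | C p.1 p.2}) :
    MeasurableSet {a | ∃ y, C a y ∧ T (f a) (g a) y} := by
  have hm : Measurable fun a => η (f a) {y | C a y ∧ T (f a) (g a) y} := by
    refine measurable_kernel_section η (S := fun a y => C a y ∧ T (f a) (g a) y) hf ?_
    have : Measurable fun p : α × Rd d => ((f p.1, g p.1), p.2) := by fun_prop
    exact hC.inter (this hT.meas)
  have : {a | ∃ y, C a y ∧ T (f a) (g a) y}
      = {a | η (f a) {y | C a y ∧ T (f a) (g a) y} = 0}ᶜ := by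
    ext a
    simp only [mem_ofPred_eq, mem_compl_iff]
    constructor
    · rintro ⟨y, hy⟩ h0
      exact (hT.pos _ _ _ hy.2).ne' (measure_mono_null (singleton_subset_iff.2 hy) h0)
    · intro h
      by_contra hne
      refine h ?_
      have : {y | C a y ∧ T (f a) (g a) y} = ∅ := by
        ext y
        simpa using fun h1 h2 => hne ⟨y, h1, h2⟩
      simp [this]
  rw [this]
  exact (measurableSet_eq_fun hm measurable_const).compl

/-- **Mass transport principle**: the mean mass sent out of the unit cube equals the mean mass
received by it. Both are obtained from the mean mass sent from the cube `B` to `B + z` by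
integrating over `z`. -/
lemma mass_transport (P : Measure Ω) [IsProbabilityMeasure P] (hflow : IsMeasurableFlow θ)
    (hstat : IsStationary P θ) (hξ : IsPerfect θ ξ) (hη : IsPerfect θ η)
    (hT : IsPartialAllocation ξ η θ T) :
    ∫⁻ ω, ξ ω {x | x ∈ unitCube d ∧ ∃ y, T ω x y} ∂P
      = ∫⁻ ω, ξ ω {x | ∃ y ∈ unitCube d, T ω x y} ∂P := by
  have := hξ.isSFiniteKernel
  have := hη.isSFiniteKernel
  set B := unitCube d with hB
  have hBm : MeasurableSet B := (isCompact_unitCube d).measurableSet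
  have hB0 : volume B ≠ 0 :=
    ((isOpen_interior.measure_pos volume (interior_unitCube_nonempty d)).trans_le
      (measure_mono interior_subset)).ne'
  have hBtop : volume B ≠ ∞ := (isCompact_unitCube d).measure_lt_top.ne
  have hmS1 : MeasurableSet {p : (Ω × Rd d) × Rd d |
      p.1.2 ∈ B ∧ ∃ y, y - p.2 ∈ B ∧ T p.1.1 p.1.2 y} := by
    have h1 : MeasurableSet {p : (Ω × Rd d) × Rd d | p.1.2 ∈ B} :=
      (measurable_snd.comp measurable_fst) hBm
    refine h1.inter (measurableSet_exists hT (f := fun p : (Ω × Rd d) × Rd d => p.1.1)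
      (g := fun p => p.1.2) (by fun_prop) (by fun_prop) (C := fun p y => y - p.2 ∈ B) ?_)
    have : Measurable fun q : ((Ω × Rd d) × Rd d) × Rd d => q.2 - q.1.2 := by fun_prop
    exact this hBm
  have hmS2 : MeasurableSet {p : (Ω × Rd d) × Rd d |
      p.1.2 + p.2 ∈ B ∧ ∃ y, y ∈ B ∧ T p.1.1 p.1.2 y} := by
    have h1 : MeasurableSet {p : (Ω × Rd d) × Rd d | p.1.2 + p.2 ∈ B} := by
      have : Measurable fun p : (Ω × Rd d) × Rd d => p.1.2 + p.2 := by fun_prop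
      exact this hBm
    exact h1.inter (measurableSet_exists hT (f := fun p : (Ω × Rd d) × Rd d => p.1.1)
      (g := fun p => p.1.2) (by fun_prop) (by fun_prop) (C := fun p y => y ∈ B)
      (measurable_snd hBm))
  -- shifting by `z` does not change the mean mass sent from `B` to `B + z`
  have hshift : ∀ z, ∫⁻ ω, ξ ω {x | x ∈ B ∧ ∃ y, y - z ∈ B ∧ T ω x y} ∂P
      = ∫⁻ ω, ξ ω {x | x + z ∈ B ∧ ∃ y, y ∈ B ∧ T ω x y} ∂P := by
    intro z
    have hm : Measurable fun ω => ξ ω {x | x + z ∈ B ∧ ∃ y, y ∈ B ∧ T ω x y} := by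
      refine measurable_kernel_section ξ (f := id)
        (S := fun ω x => x + z ∈ B ∧ ∃ y, y ∈ B ∧ T ω x y) measurable_id ?_
      have : Measurable fun p : Ω × Rd d => (p, z) := by fun_prop
      exact this hmS2
    conv_rhs => rw [← hstat z, lintegral_map hm (measurable_flow hflow z)]
    refine lintegral_congr fun ω => ?_
    rw [hξ.apply]
    congr 1
    ext x
    simp only [mem_ofPred_eq, sub_add_cancel, and_congr_right_iff]
    intro _
    constructor
    · rintro ⟨y, hy, h⟩
      exact ⟨y - z, hy, (hT.covariant ω z x y).2 h⟩
    · rintro ⟨y, hy, h⟩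
      refine ⟨y + z, by simpa using hy, (hT.covariant ω z x (y + z)).1 (by simpa using h)⟩
  have hvol1 : ∀ y : Rd d, volume {z | y - z ∈ B} = volume B := fun y =>
    (Measure.measurePreserving_sub_left volume y).measure_preimage hBm.nullMeasurableSet
  have hvol2 : ∀ x : Rd d, volume {z | x + z ∈ B} = volume B := fun x =>
    measure_preimage_add volume x B
  have hout : ∫⁻ z, ∫⁻ ω, ξ ω {x | x ∈ B ∧ ∃ y, y - z ∈ B ∧ T ω x y} ∂P ∂(volume : Measure (Rd d))
      = volume B * ∫⁻ ω, ξ ω {x | x ∈ B ∧ ∃ y, T ω x y} ∂P := by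
    have hm : MeasurableSet {p : Ω × Rd d | p.2 ∈ B ∧ ∃ y, T p.1 p.2 y} := by
      have h1 : MeasurableSet {p : Ω × Rd d | p.2 ∈ B} := measurable_snd hBm
      have h2 := measurableSet_exists hT (f := fun p : Ω × Rd d => p.1)
        (g := fun p => p.2) (by fun_prop) (by fun_prop) (C := fun p y => True) (by simp)
      simp only [true_and] at h2
      exact h1.inter h2
    have hmω : Measurable fun ω => ξ ω {x | x ∈ B ∧ ∃ y, T ω x y} :=
      measurable_kernel_section ξ (f := id)
        (S := fun ω x => x ∈ B ∧ ∃ y, T ω x y) measurable_id hm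
    rw [lintegral_section_swap P ξ (S := fun ω x z => x ∈ B ∧ ∃ y, y - z ∈ B ∧ T ω x y) hmS1,
      ← lintegral_const_mul _ hmω]
    refine lintegral_congr fun ω => ?_
    have hsec : MeasurableSet {x | x ∈ B ∧ ∃ y, T ω x y} := by
      have : Measurable fun x : Rd d => (ω, x) := by fun_prop
      exact this hm
    rw [← lintegral_indicator_const hsec]
    refine lintegral_congr fun x => ?_
    by_cases hx : x ∈ {x | x ∈ B ∧ ∃ y, T ω x y}
    · rw [indicator_of_mem hx]
      obtain ⟨hxB, y, hy⟩ := hx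
      rw [← hvol1 y]
      congr 1
      ext z
      simp only [mem_ofPred_eq]
      constructor
      · rintro ⟨_, y', hy', h'⟩
        rwa [hT.func ω x y y' hy h']
      · exact fun h => ⟨hxB, y, h, hy⟩
    · rw [indicator_of_notMem hx]
      have : {z | x ∈ B ∧ ∃ y, y - z ∈ B ∧ T ω x y} = ∅ := by
        ext z
        simp only [mem_ofPred_eq, mem_empty_iff_false, iff_false]
        rintro ⟨h1, y, _, h2⟩
        exact hx ⟨h1, y, h2⟩
      simp [this]
  have hin : ∫⁻ z, ∫⁻ ω, ξ ω {x | x + z ∈ B ∧ ∃ y, y ∈ B ∧ T ω x y} ∂P ∂(volume : Measure (Rd d))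
      = volume B * ∫⁻ ω, ξ ω {x | ∃ y ∈ B, T ω x y} ∂P := by
    have hm : MeasurableSet {p : Ω × Rd d | ∃ y ∈ B, T p.1 p.2 y} :=
      measurableSet_exists hT (f := fun p : Ω × Rd d => p.1)
        (g := fun p => p.2) (by fun_prop) (by fun_prop) (C := fun p y => y ∈ B)
        (measurable_snd hBm)
    have hmω : Measurable fun ω => ξ ω {x | ∃ y ∈ B, T ω x y} :=
      measurable_kernel_section ξ (f := id)
        (S := fun ω x => ∃ y ∈ B, T ω x y) measurable_id hm
    rw [lintegral_section_swap P ξ (S := fun ω x z => x + z ∈ B ∧ ∃ y, y ∈ B ∧ T ω x y) hmS2,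
      ← lintegral_const_mul _ hmω]
    refine lintegral_congr fun ω => ?_
    have hsec : MeasurableSet {x | ∃ y ∈ B, T ω x y} := by
      have : Measurable fun x : Rd d => (ω, x) := by fun_prop
      exact this hm
    rw [← lintegral_indicator_const hsec]
    refine lintegral_congr fun x => ?_
    by_cases hx : x ∈ {x | ∃ y ∈ B, T ω x y}
    · rw [indicator_of_mem hx, ← hvol2 x]
      congr 1
      ext z
      exact ⟨fun h => h.1, fun h => ⟨h, hx⟩⟩
    · rw [indicator_of_notMem hx]
      have : {z | x + z ∈ B ∧ ∃ y, y ∈ B ∧ T ω x y} = ∅ := by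
        ext z
        simp only [mem_ofPred_eq, mem_empty_iff_false, iff_false]
        exact fun h => hx h.2
      simp [this]
  have hkey : volume B * ∫⁻ ω, ξ ω {x | x ∈ B ∧ ∃ y, T ω x y} ∂P
      = volume B * ∫⁻ ω, ξ ω {x | ∃ y ∈ B, T ω x y} ∂P := by
    rw [← hout, ← hin]
    exact lintegral_congr hshift
  exact (ENNReal.mul_right_inj hB0 hBtop).1 hkey

end Stationary

/-! ### The allocation map -/

section Allocation

variable {d : ℕ} {ξ η : Kernel Ω (Rd d)} {θ : Rd d → Ω → Ω} {T : Ω → Rd d → Rd d → Prop}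

open Classical in
/-- The map sending a site to its target under the relation `T`, and to `∞` if there is none. -/
def allocationMap (T : Ω → Rd d → Rd d → Prop) (ω : Ω) (x : Rd d) : Option (Rd d) :=
  if h : ∃ y, T ω x y then some h.choose else none

lemma allocationMap_eq_some (hT : IsPartialAllocation ξ η θ T) {ω : Ω} {x y : Rd d} :
    allocationMap T ω x = some y ↔ T ω x y := by
  unfold allocationMap
  split_ifs with h
  · rw [Option.some_inj]
    exact ⟨fun e => e ▸ h.choose_spec, fun h' => hT.func ω x _ _ h.choose_spec h'⟩
  · simpa using fun h' => h ⟨y, h'⟩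

lemma allocationMap_eq_none {ω : Ω} {x : Rd d} :
    allocationMap T ω x = none ↔ ¬ ∃ y, T ω x y := by
  unfold allocationMap
  split_ifs with h <;> simpa using h

lemma measurableSet_allocated [IsSFiniteKernel η] (hT : IsPartialAllocation ξ η θ T) :
    MeasurableSet {p : Ω × Rd d | ∃ y, T p.1 p.2 y} := by
  simpa using measurableSet_exists hT (f := fun p : Ω × Rd d => p.1)
    (g := fun p => p.2) (by fun_prop) (by fun_prop) (C := fun p y => True) (by simp)

lemma exists_covariant (hT : IsPartialAllocation ξ η θ T) (ω : Ω) (z x : Rd d) :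
    (∃ y, T (θ z ω) (x - z) y) ↔ ∃ y, T ω x y :=
  ⟨fun ⟨y, h⟩ => ⟨y + z, (hT.covariant ω z x (y + z)).1 (by simpa using h)⟩,
    fun ⟨y, h⟩ => ⟨y - z, (hT.covariant ω z x y).2 h⟩⟩

lemma isAllocation_allocationMap [IsSFiniteKernel η] (P : Measure Ω)
    (hT : IsPartialAllocation ξ η θ T) : IsAllocation P θ (allocationMap T) := by
  refine ⟨fun s hs => ?_, ae_of_all _ fun ω x y => ?_⟩
  · have hs' : MeasurableSet (some ⁻¹' s : Set (Rd d)) := hs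
    have h1 : MeasurableSet {p : Ω × Rd d | ∃ y, y ∈ (some ⁻¹' s : Set (Rd d)) ∧ T p.1 p.2 y} :=
      measurableSet_exists hT (f := fun p : Ω × Rd d => p.1)
        (g := fun p => p.2) (by fun_prop) (by fun_prop) (C := fun _ y => y ∈ some ⁻¹' s)
        (measurable_snd hs')
    have h2 := (measurableSet_allocated hT).compl.inter (MeasurableSet.const (none ∈ s))
    convert h1.union h2 using 1
    ext p
    simp only [mem_preimage, mem_union, mem_inter_iff, mem_compl_iff, mem_ofPred_eq]
    by_cases h : ∃ y, T p.1 p.2 y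
    · obtain ⟨y, hy⟩ := h
      rw [(allocationMap_eq_some hT).2 hy]
      constructor
      · exact fun h => Or.inl ⟨y, h, hy⟩
      · rintro (⟨y', h', hy'⟩ | h')
        · rwa [hT.func _ _ _ _ hy hy']
        · exact absurd ⟨y, hy⟩ h'.1
    · rw [allocationMap_eq_none.2 h]
      constructor
      · exact fun h' => Or.inr ⟨h, h'⟩
      · rintro (⟨y', _, hy'⟩ | h')
        · exact absurd ⟨y', hy'⟩ h
        · exact h'.2
  · by_cases h : ∃ z, T ω x z
    · obtain ⟨z, hz⟩ := h
      rw [(allocationMap_eq_some hT).2 hz]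
      exact (allocationMap_eq_some hT).2 ((hT.covariant ω y x z).2 hz)
    · rw [allocationMap_eq_none.2 h]
      exact allocationMap_eq_none.2 (mt (exists_covariant hT ω y x).1 h)

end Allocation

/-! ### Saturation of the destination -/

section Saturation

variable {d : ℕ} {ξ η : Kernel Ω (Rd d)} {θ : Rd d → Ω → Ω} {T : Ω → Rd d → Rd d → Prop}

lemma measurable_received [IsSFiniteKernel ξ] [IsSFiniteKernel η]
    (hT : IsPartialAllocation ξ η θ T) :
    Measurable fun ω => ξ ω {x | ∃ y ∈ unitCube d, T ω x y} :=
  measurable_kernel_section ξ (f := id) (S := fun ω x => ∃ y ∈ unitCube d, T ω x y) measurable_id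
    (measurableSet_exists hT (f := fun p : Ω × Rd d => p.1)
        (g := fun p => p.2) (by fun_prop) (by fun_prop) (C := fun _ y => y ∈ unitCube d)
        (measurable_snd (isCompact_unitCube d).measurableSet))

lemma forall_residual_iff (ω : Ω) :
    η ω {y | 0 < residual ξ η T ω y} = 0 ↔ ∀ y, residual ξ η T ω y = 0 := by
  constructor
  · intro h y
    by_contra hy
    have h1 : 0 < residual ξ η T ω y := pos_iff_ne_zero.2 hy
    exact (h1.trans_le (residual_le ω y)).ne'
      (measure_mono_null (singleton_subset_iff.2 h1) h)
  · intro h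
    simp [h]

/-- Almost surely every atom is saturated. Otherwise, by ergodicity, there are a.s. unsaturated
atoms, hence a.s. every site is allocated; by mass transport the mean mass received by the unit
cube is then `λ_ξ ≥ λ_η`, which forces saturation after all. -/
lemma ae_residual_eq_zero (P : Measure Ω) [IsProbabilityMeasure P] (hflow : IsMeasurableFlow θ)
    (hstat : IsStationary P θ) (herg : IsErgodicFlow P θ) (hξ : IsPerfect θ ξ)
    (hη : IsPerfect θ η) (hT : IsPartialAllocation ξ η θ T)
    (hdich : ∀ᵐ ω ∂P, ∀ x, (¬ ∃ y, T ω x y) → ∀ y, residual ξ η T ω y = 0)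
    (hfin : intensity P ξ < ∞) (hle : intensity P η ≤ intensity P ξ) :
    ∀ᵐ ω ∂P, ∀ y, residual ξ η T ω y = 0 := by
  have := hξ.isSFiniteKernel
  have := hη.isSFiniteKernel
  have hQ := (isCompact_unitCube d).measurableSet
  set H : Set Ω := {ω | η ω {y | 0 < residual ξ η T ω y} = 0} with hH
  have hHm : MeasurableSet H := by
    refine measurableSet_eq_fun (measurable_kernel_section η (f := id)
      (S := fun ω y => 0 < residual ξ η T ω y) measurable_id ?_) measurable_const
    exact measurableSet_lt measurable_const (measurable_residual hT)
  have hHinv : ∀ z, θ z ⁻¹' H = H := by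
    intro z
    ext ω
    simp only [hH, mem_preimage, mem_ofPred_eq, hη.apply, residual_covariant hξ hη hT.covariant]
  suffices hsuff : ∀ᵐ ω ∂P, ω ∈ H by
    filter_upwards [hsuff] with ω hω using (forall_residual_iff ω).1 hω
  rcases herg H hHm hHinv with h0 | h1
  · have hnot : ∀ᵐ ω ∂P, ω ∉ H := measure_eq_zero_iff_ae_notMem.1 h0
    have hall : ∀ᵐ ω ∂P, ∀ x, ∃ y, T ω x y := by
      filter_upwards [hnot, hdich] with ω hω hd x
      by_contra hx
      exact hω ((forall_residual_iff ω).2 (hd x hx))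
    have hout : ∫⁻ ω, ξ ω {x | x ∈ unitCube d ∧ ∃ y, T ω x y} ∂P = intensity P ξ := by
      refine lintegral_congr_ae ?_
      filter_upwards [hall] with ω hω
      simp [hω]
    have heq : (fun ω => ξ ω {x | ∃ y ∈ unitCube d, T ω x y}) =ᵐ[P]
        fun ω => η ω (unitCube d) := by
      refine ae_eq_of_ae_le_of_lintegral_le (ae_of_all _ fun ω => mass_le hη hT ω _) ?_
        (η.measurable_coe hQ).aemeasurable ?_
      · rw [← mass_transport P hflow hstat hξ hη hT, hout]
        exact hfin.ne
      · rw [← mass_transport P hflow hstat hξ hη hT, hout]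
        exact hle
    refine ae_null_of_unitCube hflow hstat hη (S := fun ω y => 0 < residual ξ η T ω y)
      (fun ω z y => by rw [residual_covariant hξ hη hT.covariant]) ?_
    filter_upwards [heq] with ω hω
    have hempty : {y | y ∈ unitCube d ∧ 0 < residual ξ η T ω y} = ∅ := by
      ext y
      simp only [mem_ofPred_eq, mem_empty_iff_false, iff_false]
      rintro ⟨hy, hpos⟩
      exact hpos.ne' (residual_eq_zero_of_mass hη hT hQ
        (hη.lt_top ω (isCompact_unitCube d).isBounded).ne hω.ge hy)
    simp [hempty]
  · exact (mem_ae_iff_prob_eq_one hHm).2 h1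

/-- If the intensities agree and every atom is saturated, then a.s. almost every site is
allocated. -/
lemma ae_unallocated_null (P : Measure Ω) [IsProbabilityMeasure P] (hflow : IsMeasurableFlow θ)
    (hstat : IsStationary P θ) (hξ : IsPerfect θ ξ) (hη : IsPerfect θ η)
    (hT : IsPartialAllocation ξ η θ T)
    (hmass : ∀ᵐ ω ∂P, ξ ω {x | ∃ y ∈ unitCube d, T ω x y} = η ω (unitCube d))
    (hfin : intensity P ξ < ∞) (heq : intensity P ξ = intensity P η) :
    ∀ᵐ ω ∂P, ξ ω {x | ¬ ∃ y, T ω x y} = 0 := by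
  have := hξ.isSFiniteKernel
  have := hη.isSFiniteKernel
  have hQ := (isCompact_unitCube d).measurableSet
  refine ae_null_of_unitCube hflow hstat hξ (S := fun ω x => ¬ ∃ y, T ω x y)
    (fun ω z x => not_congr (exists_covariant hT ω z x)) ?_
  have hout : ∫⁻ ω, ξ ω {x | x ∈ unitCube d ∧ ∃ y, T ω x y} ∂P = intensity P ξ := by
    rw [mass_transport P hflow hstat hξ hη hT, heq]
    exact lintegral_congr_ae hmass
  have hae : (fun ω => ξ ω {x | x ∈ unitCube d ∧ ∃ y, T ω x y}) =ᵐ[P]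
      fun ω => ξ ω (unitCube d) := by
    refine ae_eq_of_ae_le_of_lintegral_le (ae_of_all _ fun ω => measure_mono fun x hx => hx.1) ?_
      (ξ.measurable_coe hQ).aemeasurable ?_
    · rw [hout]
      exact hfin.ne
    · rw [hout]
      exact le_rfl
  filter_upwards [hae] with ω hω
  have hA : MeasurableSet {x | ∃ y, T ω x y} := by
    have : Measurable fun x : Rd d => (ω, x) := by fun_prop
    exact this (measurableSet_allocated hT)
  have h := measure_inter_add_sdiff (μ := ξ ω) (unitCube d) hA
  change ξ ω {x | x ∈ unitCube d ∧ ∃ y, T ω x y} + ξ ω {x | x ∈ unitCube d ∧ ¬ ∃ y, T ω x y} = _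
    at h
  rw [hω] at h
  have hne := (hξ.lt_top ω (isCompact_unitCube d).isBounded).ne
  exact (ENNReal.add_right_inj hne).1 (h.trans (add_zero _).symm)

end Saturation

/-- **Proposition (general discrete destination).** Let `ξ` and `η` be jointly
stationary and ergodic random measures on `ℝ^d` with `ξ` diffuse, `η` discrete
(possibly with non-isolated atoms), and `∞ > λ_ξ ≥ λ_η > 0`. Then there exist a
measurable set `A ⊆ Ω × ℝ^d` and an allocation `τ` balancing the restriction
`ξ_A` and `η`; moreover if `λ_ξ = λ_η` then `τ` balances `ξ` and `η`. -/
theorem exists_balancing_allocation_of_discrete_destination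
    {d : ℕ} {Ω : Type*} [MeasurableSpace Ω] (P : Measure Ω) [IsProbabilityMeasure P]
    (θ : Rd d → Ω → Ω) (ξ η : Ω → Measure (Rd d))
    (hflow : IsMeasurableFlow θ) (hstat : IsStationary P θ) (herg : IsErgodicFlow P θ)
    (hξ : IsRandomMeasure P ξ) (hη : IsRandomMeasure P η)
    (hξinv : IsFlowInvariant P θ ξ) (hηinv : IsFlowInvariant P θ η)
    (hξdiff : IsDiffuseRM P ξ) (hηdisc : IsDiscreteRM P η)
    (hfin : intensity P ξ < ∞) (hle : intensity P η ≤ intensity P ξ)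
    (hpos : 0 < intensity P η) :
    ∃ A : Set (Ω × Rd d), MeasurableSet A ∧
      ∃ τ : Ω → Rd d → Option (Rd d), IsAllocation P θ τ ∧
        Balances P (fun ω => (ξ ω).restrict {x | (ω, x) ∈ A}) η τ ∧
        (intensity P ξ = intensity P η → Balances P ξ η τ) := by
  obtain ⟨κ, hκ, hκξ⟩ := exists_perfect_modification P θ hflow hstat ξ hξ hξinv
  obtain ⟨μ, hμ, hμη⟩ := exists_perfect_modification P θ hflow hstat η hη hηinv
  have := hμ.isSFiniteKernel
  have hIξ : intensity P κ = intensity P ξ :=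
    lintegral_congr_ae (hκξ.mono fun ω h => by simp only [h])
  have hIη : intensity P μ = intensity P η :=
    lintegral_congr_ae (hμη.mono fun ω h => by simp only [h])
  have hT := greedyLimit_isPartialAllocation hκ hμ
  have hdich : ∀ᵐ ω ∂P, ∀ x, (¬ ∃ y, greedyLimit κ μ ω x y) →
      ∀ y, residual κ μ (greedyLimit κ μ) ω y = 0 := by
    filter_upwards [hκξ, hξdiff] with ω h hd x hx y
    exact greedyLimit_dichotomy hκ hμ (by rwa [h]) hx y
  have hres := ae_residual_eq_zero P hflow hstat herg hκ hμ hT hdich (by rwa [hIξ])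
    (by rwa [hIξ, hIη])
  have hmass : ∀ᵐ ω ∂P, ∀ C : Set (Rd d),
      κ ω {x | ∃ y ∈ C, greedyLimit κ μ ω x y} = μ ω C := by
    filter_upwards [hres, hμη, hηdisc] with ω hω h hd C
    exact mass_eq hμ hT (by rwa [h]) hω C
  have hA := measurableSet_allocated hT
  refine ⟨{p | ∃ y, greedyLimit κ μ p.1 p.2 y}, hA, allocationMap (greedyLimit κ μ),
    isAllocation_allocationMap P hT, ?_, fun heq => ?_⟩
  · filter_upwards [hκξ, hμη, hmass] with ω h1 h2 h3
    have hAω : MeasurableSet {x | ∃ y, greedyLimit κ μ ω x y} := by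
      have : Measurable fun x : Rd d => (ω, x) := by fun_prop
      exact this hA
    simp only [allocationMap_eq_none, allocationMap_eq_some hT]
    refine ⟨?_, fun C _ => ?_⟩
    · rw [Measure.restrict_apply' hAω]
      refine measure_mono_null (t := ∅) ?_ measure_empty
      rintro x ⟨h, h'⟩
      exact h h'
    · rw [Measure.restrict_apply' hAω, inter_eq_left.2, ← h1, ← h2]
      · exact h3 C
      · rintro x ⟨y, _, h⟩
        exact ⟨y, h⟩
  · have hnull := ae_unallocated_null P hflow hstat hκ hμ hT (hmass.mono fun ω h => h _)
      (by rwa [hIξ]) (by rw [hIξ, hIη, heq])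
    filter_upwards [hκξ, hμη, hmass, hnull] with ω h1 h2 h3 h4
    simp only [allocationMap_eq_none, allocationMap_eq_some hT, ← h1, ← h2]
    exact ⟨h4, fun C _ => h3 C⟩

end Paper
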